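/- No CacLL formula is simultaneously the positive translation of some acLL formula and the De Morgan dual of the positive translation of some acLL formula; that is, there are no acLL formulas A, B with Â = B̂⊥. -/

import Mathlib

set_option autoImplicit false

namespace NACLL

/-- Structures: binary trees whose leaves are formulas, with an empty structure.
`(∅,Γ)` and `(Γ,∅)` are identified with `Γ` via the smart constructor `comma`. -/
inductive Struct (F : Type) : Type where
  | emp : Struct F
  | leaf : F → Struct F
  | pair : Struct F → Struct F → Struct F

namespace Struct

/-- Pairing of structures, erasing empty substructures. -/
def comma {F : Type} : Struct F → Struct F → Struct F
  | .emp, Δ => Δ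
  | Γ, .emp => Γ
  | Γ, Δ => .pair Γ Δ

def map {F G : Type} (f : F → G) : Struct F → Struct G
  | .emp => .emp
  | .leaf a => .leaf (f a)
  | .pair l r => .pair (map f l) (map f r)

/-- Number of formula leaves of a structure. -/
def nleaves {F : Type} : Struct F → ℕ
  | .emp => 0
  | .leaf _ => 1
  | .pair l r => nleaves l + nleaves r

/-- All formula leaves of a structure satisfy a predicate. -/
def Forall {F : Type} (p : F → Prop) : Struct F → Prop
  | .emp => True
  | .leaf a => p a
  | .pair l r => Forall p l ∧ Forall p r

end Struct

/-- Structural equivalence: the reflexive, symmetric, transitive closure of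
top-level exchange and top-level associativity. -/
inductive StEquiv {F : Type} : Struct F → Struct F → Prop where
  | refl (Γ : Struct F) : StEquiv Γ Γ
  | symm {Γ Δ : Struct F} : StEquiv Γ Δ → StEquiv Δ Γ
  | trans {Γ Δ Θ : Struct F} : StEquiv Γ Δ → StEquiv Δ Θ → StEquiv Γ Θ
  | exch (Γ Δ : Struct F) : StEquiv (Γ.comma Δ) (Δ.comma Γ)
  | assoc (Γ Δ Θ : Struct F) : StEquiv (Γ.comma (Δ.comma Θ)) ((Γ.comma Δ).comma Θ)

/-- Contexts with one hole. -/
inductive Ctx (F : Type) : Type where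
  | hole : Ctx F
  | pairL : Ctx F → Struct F → Ctx F
  | pairR : Struct F → Ctx F → Ctx F

namespace Ctx

/-- Filling the hole of a context with a structure (empty substructures are erased). -/
def fill {F : Type} : Ctx F → Struct F → Struct F
  | .hole, Ξ => Ξ
  | .pairL R Δ, Ξ => (fill R Ξ).comma Δ
  | .pairR Γ R, Ξ => Γ.comma (fill R Ξ)

/-- A context viewed as a structure over `Option F`, the hole being the leaf `none`. -/
def toStruct {F : Type} : Ctx F → Struct (Option F)
  | .hole => .leaf none
  | .pairL R Δ => (toStruct R).comma (Δ.map some)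
  | .pairR Γ R => (Γ.map some).comma (toStruct R)

def size {F : Type} : Ctx F → ℕ
  | .hole => 0
  | .pairL R _ => size R + 2
  | .pairR _ R => size R + 1

/-- The designator. -/
def desi {F : Type} : Ctx F → Struct F
  | .hole => .emp
  | .pairL R Δ => desi (.pairR Δ R)
  | .pairR Γ .hole => Γ
  | .pairR Γ (.pairR Δ P) => desi (.pairR (Γ.comma Δ) P)
  | .pairR Γ (.pairL D Θp) => desi (.pairR (Θp.comma Γ) D)
termination_by c => size c
decreasing_by all_goals simp [size]

/-- All formula leaves of a context (other than the hole) satisfy a predicate. -/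
def Forall {F : Type} (p : F → Prop) : Ctx F → Prop
  | .hole => True
  | .pairL R Δ => Forall p R ∧ Δ.Forall p
  | .pairR Γ R => Γ.Forall p ∧ Forall p R

end Ctx

/-- Structural equivalence of one-hole contexts, treating the hole as a leaf. -/
def CtxEquiv {F : Type} (T X : Ctx F) : Prop := StEquiv T.toStruct X.toStruct

/-- Contexts with two holes (the first hole is the designated one). -/
inductive Ctx2 (F : Type) : Type where
  | splitLR : Ctx F → Ctx F → Ctx2 F
  | splitRL : Ctx F → Ctx F → Ctx2 F
  | pairL : Ctx2 F → Struct F → Ctx2 F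
  | pairR : Struct F → Ctx2 F → Ctx2 F

namespace Ctx2

/-- Filling the first hole of a two-hole context, yielding a one-hole context. -/
def fillFst {F : Type} : Ctx2 F → Struct F → Ctx F
  | .splitLR c1 c2, Δ => .pairR (c1.fill Δ) c2
  | .splitRL c2 c1, Δ => .pairL c2 (c1.fill Δ)
  | .pairL R Γ, Δ => .pairL (fillFst R Δ) Γ
  | .pairR Γ R, Δ => .pairR Γ (fillFst R Δ)

end Ctx2

end NACLL
namespace NACLL

/-- Structural axioms that a subexponential may license. -/
inductive SubAx : Type where
  | C : SubAx
  | W : SubAx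
  | E : SubAx
  | A1 : SubAx
  | A2 : SubAx
deriving DecidableEq

/-- A subexponential signature: a preordered set of indices together with an
upwardly closed assignment of licensed structural axioms. -/
structure Sig (I : Type) where
  le : I → I → Prop
  le_refl : ∀ i, le i i
  le_trans : ∀ {i j k}, le i j → le j k → le i k
  f : I → Set SubAx
  upclosed : ∀ {i j}, le i j → f i ⊆ f j

/-- Formulas of classical non-associative non-commutative multimodal linear logic. -/
inductive CForm (I : Type) : Type where
  | pos : ℕ → CForm I
  | neg : ℕ → CForm I
  | tensor : CForm I → CForm I → CForm I
  | par : CForm I → CForm I → CForm I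
  | one : CForm I
  | bot : CForm I
  | oplus : CForm I → CForm I → CForm I
  | with' : CForm I → CForm I → CForm I
  | zero : CForm I
  | top : CForm I
  | bang : I → CForm I → CForm I
  | quest : I → CForm I → CForm I

namespace CForm

/-- De Morgan dual, pushed to atomic scope (order-reversing on the multiplicatives). -/
def dual {I : Type} : CForm I → CForm I
  | .pos a => .neg a
  | .neg a => .pos a
  | .tensor A B => .par (dual B) (dual A)
  | .par A B => .tensor (dual B) (dual A)
  | .one => .bot
  | .bot => .one
  | .oplus A B => .with' (dual A) (dual B)
  | .with' A B => .oplus (dual A) (dual B)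
  | .zero => .top
  | .top => .zero
  | .bang i A => .quest i (dual A)
  | .quest i A => .bang i (dual A)

/-- The counter ♮ on formulas. -/
def counter {I : Type} : CForm I → ℤ
  | .pos _ => 0
  | .neg _ => 1
  | .tensor A B => counter A + counter B
  | .par A B => counter A + counter B - 1
  | .one => 0
  | .bot => 1
  | .oplus A _ => counter A
  | .with' A _ => counter A
  | .zero => 1
  | .top => 0
  | .bang _ A => counter A
  | .quest _ A => counter A

end CForm

/-- The counter ♮ extended to structures. -/
def Struct.counter {I : Type} : Struct (CForm I) → ℤ
  | .emp => 0
  | .leaf A => A.counter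
  | .pair l r => counter l + counter r

/-- All leaves of a (nonempty) structure are `?ᵏ`-formulas whose label licenses
the given structural axiom. -/
inductive QAll {I : Type} (σ : Sig I) (ax : SubAx) : Struct (CForm I) → Prop where
  | leaf {k : I} {F : CForm I} (h : ax ∈ σ.f k) : QAll σ ax (.leaf (.quest k F))
  | pair {Γ Δ : Struct (CForm I)} : QAll σ ax Γ → QAll σ ax Δ → QAll σ ax (.pair Γ Δ)

/-- `UpSet σ i Γ Γ'` holds iff `Γ^{↑i}` is defined and equal to `Γ'`:
every leaf of `Γ` is a `?ᵏ`-formula which is kept when `i ⪯ k` and erased when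
`i ⋠ k` and `W ∈ f(k)`. -/
inductive UpSet {I : Type} (σ : Sig I) (i : I) : Struct (CForm I) → Struct (CForm I) → Prop where
  | emp : UpSet σ i .emp .emp
  | keep {k : I} {F : CForm I} (h : σ.le i k) :
      UpSet σ i (.leaf (.quest k F)) (.leaf (.quest k F))
  | drop {k : I} {F : CForm I} (h1 : ¬ σ.le i k) (h2 : SubAx.W ∈ σ.f k) :
      UpSet σ i (.leaf (.quest k F)) .emp
  | pair {Γ Γ' Δ Δ' : Struct (CForm I)} :
      UpSet σ i Γ Γ' → UpSet σ i Δ Δ' → UpSet σ i (.pair Γ Δ) (Γ'.comma Δ')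

/-- Structures over `Option F` serve as multi-hole contexts: `none`-leaves are
holes. `fillAll T D` fills every hole with `D` (erasing empty substructures). -/
def fillAll {F : Type} : Struct (Option F) → Struct F → Struct F
  | .emp, _ => .emp
  | .leaf (some a), _ => .leaf a
  | .leaf none, D => D
  | .pair l r, D => (fillAll l D).comma (fillAll r D)

/-- Derivability in the one-sided classical sequent calculus CacLL over the
signature `σ`.  The Boolean flag indicates whether the cut rule may be used:
`CDer σ false` is cut-free CacLL, `CDer σ true` is CacLL extended with cut. -/
inductive CDer {I : Type} (σ : Sig I) : Bool → Struct (CForm I) → Prop where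
  | initP {b : Bool} (a : ℕ) :
      CDer σ b (.pair (.leaf (.pos a)) (.leaf (.neg a)))
  | initN {b : Bool} (a : ℕ) :
      CDer σ b (.pair (.leaf (.neg a)) (.leaf (.pos a)))
  | tensor {b : Bool} {Γ Δ : Struct (CForm I)} {F G : CForm I} :
      CDer σ b (Γ.comma (.leaf G)) → CDer σ b (Δ.comma (.leaf F)) →
      CDer σ b ((Γ.comma Δ).comma (.leaf (.tensor F G)))
  | par {b : Bool} (R : Ctx (CForm I)) {F G : CForm I} :
      CDer σ b (R.fill (.pair (.leaf F) (.leaf G))) →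
      CDer σ b (R.fill (.leaf (.par F G)))
  | oplus₁ {b : Bool} (R : Ctx (CForm I)) {F1 F2 : CForm I} :
      CDer σ b (R.fill (.leaf F1)) → CDer σ b (R.fill (.leaf (.oplus F1 F2)))
  | oplus₂ {b : Bool} (R : Ctx (CForm I)) {F1 F2 : CForm I} :
      CDer σ b (R.fill (.leaf F2)) → CDer σ b (R.fill (.leaf (.oplus F1 F2)))
  | with' {b : Bool} (R : Ctx (CForm I)) {F1 F2 : CForm I} :
      CDer σ b (R.fill (.leaf F1)) → CDer σ b (R.fill (.leaf F2)) →
      CDer σ b (R.fill (.leaf (.with' F1 F2)))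
  | bot {b : Bool} (R : Ctx (CForm I)) :
      CDer σ b (R.fill .emp) → CDer σ b (R.fill (.leaf .bot))
  | one {b : Bool} : CDer σ b (.leaf .one)
  | top {b : Bool} (R : Ctx (CForm I)) : CDer σ b (R.fill (.leaf .top))
  | exch {b : Bool} {Γ Δ : Struct (CForm I)} :
      CDer σ b (Δ.comma Γ) → CDer σ b (Γ.comma Δ)
  | assoc₁ {b : Bool} {Γ Δ Θ : Struct (CForm I)} :
      CDer σ b (Γ.comma (Δ.comma Θ)) → CDer σ b ((Γ.comma Δ).comma Θ)
  | assoc₂ {b : Bool} {Γ Δ Θ : Struct (CForm I)} :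
      CDer σ b ((Γ.comma Δ).comma Θ) → CDer σ b (Γ.comma (Δ.comma Θ))
  | prom {b : Bool} {Γ Γ' : Struct (CForm I)} {i : I} {F : CForm I} :
      UpSet σ i Γ Γ' → CDer σ b (Γ'.comma (.leaf F)) →
      CDer σ b (Γ.comma (.leaf (.bang i F)))
  | der {b : Bool} (R : Ctx (CForm I)) {i : I} {F : CForm I} :
      CDer σ b (R.fill (.leaf F)) → CDer σ b (R.fill (.leaf (.quest i F)))
  | qA1 {b : Bool} {Δ1 Δ2 Δ3 Γ : Struct (CForm I)} (h : QAll σ .A1 Γ) :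
      CDer σ b (((Δ1.comma Δ2).comma Δ3).comma Γ) →
      CDer σ b ((Δ1.comma (Δ2.comma Δ3)).comma Γ)
  | qA2 {b : Bool} {Δ1 Δ2 Δ3 Γ : Struct (CForm I)} (h : QAll σ .A2 Γ) :
      CDer σ b ((Δ1.comma (Δ2.comma Δ3)).comma Γ) →
      CDer σ b (((Δ1.comma Δ2).comma Δ3).comma Γ)
  | qE {b : Bool} {Δ1 Δ2 Γ : Struct (CForm I)} (h : QAll σ .E Γ) :
      CDer σ b ((Δ2.comma Δ1).comma Γ) → CDer σ b ((Δ1.comma Δ2).comma Γ)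
  | qW {b : Bool} (R : Ctx (CForm I)) {Δ : Struct (CForm I)} (h : QAll σ .W Δ) :
      CDer σ b (R.fill .emp) → CDer σ b (R.fill Δ)
  | qC {b : Bool} (R : Ctx2 (CForm I)) {Δ : Struct (CForm I)} (h : QAll σ .C Δ) :
      CDer σ b ((R.fillFst Δ).fill Δ) → CDer σ b ((R.fillFst .emp).fill Δ)
  | cut {Γ Δ : Struct (CForm I)} {A : CForm I} :
      CDer σ true (Γ.comma (.leaf A)) → CDer σ true ((Struct.leaf A.dual).comma Δ) →
      CDer σ true (Γ.comma Δ)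

end NACLL
namespace NACLL

/-- Formulas of intuitionistic non-associative non-commutative multimodal
linear logic (acLL). -/
inductive IForm (I : Type) : Type where
  | atom : ℕ → IForm I
  | tensor : IForm I → IForm I → IForm I
  | imp : IForm I → IForm I → IForm I    -- `imp A B` is A → B
  | limp : IForm I → IForm I → IForm I   -- `limp B A` is B ← A
  | oplus : IForm I → IForm I → IForm I
  | with' : IForm I → IForm I → IForm I
  | one : IForm I
  | top : IForm I
  | bang : I → IForm I → IForm I

/-- The positive translation of acLL formulas into CacLL formulas. -/
def IForm.pos {I : Type} : IForm I → CForm I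
  | .atom a => .pos a
  | .tensor A B => .tensor A.pos B.pos
  | .imp A B => .par A.pos.dual B.pos
  | .limp B A => .par B.pos A.pos.dual
  | .oplus A B => .oplus A.pos B.pos
  | .with' A B => .with' A.pos B.pos
  | .one => .one
  | .top => .top
  | .bang i A => .bang i A.pos

/-- The negative translation of structures of acLL formulas: it reverses the
order and takes the De Morgan dual of the positive translation on leaves. -/
def negTrans {I : Type} : Struct (IForm I) → Struct (CForm I)
  | .emp => .emp
  | .leaf A => .leaf A.pos.dual
  | .pair Γ Δ => (negTrans Δ).comma (negTrans Γ)

/-- All leaves of a (nonempty) structure are `!ᵏ`-formulas whose label licenses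
the given structural axiom. -/
inductive BAll {I : Type} (σ : Sig I) (ax : SubAx) : Struct (IForm I) → Prop where
  | leaf {k : I} {F : IForm I} (h : ax ∈ σ.f k) : BAll σ ax (.leaf (.bang k F))
  | pair {Γ Δ : Struct (IForm I)} : BAll σ ax Γ → BAll σ ax Δ → BAll σ ax (.pair Γ Δ)

/-- `IUpSet σ i Γ Γ'` holds iff `Γ^{↑i}` is defined and equal to `Γ'`. -/
inductive IUpSet {I : Type} (σ : Sig I) (i : I) : Struct (IForm I) → Struct (IForm I) → Prop where
  | emp : IUpSet σ i .emp .emp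
  | keep {k : I} {F : IForm I} (h : σ.le i k) :
      IUpSet σ i (.leaf (.bang k F)) (.leaf (.bang k F))
  | drop {k : I} {F : IForm I} (h1 : ¬ σ.le i k) (h2 : SubAx.W ∈ σ.f k) :
      IUpSet σ i (.leaf (.bang k F)) .emp
  | pair {Γ Γ' Δ Δ' : Struct (IForm I)} :
      IUpSet σ i Γ Γ' → IUpSet σ i Δ Δ' → IUpSet σ i (.pair Γ Δ) (Γ'.comma Δ')

/-- Derivability in the two-sided intuitionistic sequent calculus acLL over `σ`. -/
inductive IDer {I : Type} (σ : Sig I) : Struct (IForm I) → IForm I → Prop where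
  | init (A : IForm I) : IDer σ (.leaf A) A
  | tensorL (R : Ctx (IForm I)) {A B C : IForm I} :
      IDer σ (R.fill (.pair (.leaf A) (.leaf B))) C →
      IDer σ (R.fill (.leaf (.tensor A B))) C
  | tensorR {Γ Δ : Struct (IForm I)} {A B : IForm I} :
      IDer σ Γ A → IDer σ Δ B → IDer σ (Γ.comma Δ) (.tensor A B)
  | impL (R : Ctx (IForm I)) {Δ : Struct (IForm I)} {A B C : IForm I} :
      IDer σ Δ A → IDer σ (R.fill (.leaf B)) C →
      IDer σ (R.fill (Δ.comma (.leaf (.imp A B)))) C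
  | impR {Γ : Struct (IForm I)} {A B : IForm I} :
      IDer σ ((Struct.leaf A).comma Γ) B → IDer σ Γ (.imp A B)
  | limpL (R : Ctx (IForm I)) {Δ : Struct (IForm I)} {A B C : IForm I} :
      IDer σ Δ A → IDer σ (R.fill (.leaf B)) C →
      IDer σ (R.fill ((Struct.leaf (.limp B A)).comma Δ)) C
  | limpR {Γ : Struct (IForm I)} {A B : IForm I} :
      IDer σ (Γ.comma (.leaf A)) B → IDer σ Γ (.limp B A)
  | oplusL (R : Ctx (IForm I)) {A B C : IForm I} :
      IDer σ (R.fill (.leaf A)) C → IDer σ (R.fill (.leaf B)) C →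
      IDer σ (R.fill (.leaf (.oplus A B))) C
  | oplusR₁ {Γ : Struct (IForm I)} {A B : IForm I} : IDer σ Γ A → IDer σ Γ (.oplus A B)
  | oplusR₂ {Γ : Struct (IForm I)} {A B : IForm I} : IDer σ Γ B → IDer σ Γ (.oplus A B)
  | withL₁ (R : Ctx (IForm I)) {A B C : IForm I} :
      IDer σ (R.fill (.leaf A)) C → IDer σ (R.fill (.leaf (.with' A B))) C
  | withL₂ (R : Ctx (IForm I)) {A B C : IForm I} :
      IDer σ (R.fill (.leaf B)) C → IDer σ (R.fill (.leaf (.with' A B))) C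
  | withR {Γ : Struct (IForm I)} {A B : IForm I} :
      IDer σ Γ A → IDer σ Γ B → IDer σ Γ (.with' A B)
  | oneL (R : Ctx (IForm I)) {C : IForm I} :
      IDer σ (R.fill .emp) C → IDer σ (R.fill (.leaf .one)) C
  | oneR : IDer σ .emp .one
  | topR (Γ : Struct (IForm I)) : IDer σ Γ .top
  | prom {Γ Γ' : Struct (IForm I)} {i : I} {A : IForm I} :
      IUpSet σ i Γ Γ' → IDer σ Γ' A → IDer σ Γ (.bang i A)
  | der (R : Ctx (IForm I)) {i : I} {A C : IForm I} :
      IDer σ (R.fill (.leaf A)) C → IDer σ (R.fill (.leaf (.bang i A))) C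
  | wk (R : Ctx (IForm I)) {Δ : Struct (IForm I)} {C : IForm I} (h : BAll σ .W Δ) :
      IDer σ (R.fill .emp) C → IDer σ (R.fill Δ) C
  | ctr (R : Ctx2 (IForm I)) {Δ : Struct (IForm I)} {C : IForm I} (h : BAll σ .C Δ) :
      IDer σ ((R.fillFst Δ).fill Δ) C → IDer σ ((R.fillFst .emp).fill Δ) C
  | e1 (R : Ctx (IForm I)) {Δ Θ : Struct (IForm I)} {C : IForm I} (h : BAll σ .E Δ) :
      IDer σ (R.fill (Θ.comma Δ)) C → IDer σ (R.fill (Δ.comma Θ)) C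
  | e2 (R : Ctx (IForm I)) {Δ Θ : Struct (IForm I)} {C : IForm I} (h : BAll σ .E Δ) :
      IDer σ (R.fill (Δ.comma Θ)) C → IDer σ (R.fill (Θ.comma Δ)) C
  | a1 (R : Ctx (IForm I)) {Δ1 Δ2 Δ3 : Struct (IForm I)} {C : IForm I} (h : BAll σ .A1 Δ1) :
      IDer σ (R.fill ((Δ1.comma Δ2).comma Δ3)) C →
      IDer σ (R.fill (Δ1.comma (Δ2.comma Δ3))) C
  | a2 (R : Ctx (IForm I)) {Δ1 Δ2 Δ3 : Struct (IForm I)} {C : IForm I} (h : BAll σ .A2 Δ3) :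
      IDer σ (R.fill (Δ1.comma (Δ2.comma Δ3))) C →
      IDer σ (R.fill ((Δ1.comma Δ2).comma Δ3)) C

end NACLL

namespace NACLL

theorem CForm.counter_dual {I : Type} (A : CForm I) : A.dual.counter = 1 - A.counter := by
  induction A <;> simp only [CForm.dual, CForm.counter] <;> omega

theorem IForm.counter_pos {I : Type} (A : IForm I) : A.pos.counter = 0 := by
  induction A <;> simp only [IForm.pos, CForm.counter, CForm.counter_dual] <;> omega

/-- No CacLL formula is simultaneously the positive translation of an acLL
formula and the De Morgan dual of the positive translation of an acLL formula. -/
theorem pos_ne_dual {I : Type} (A B : IForm I) : A.pos ≠ B.pos.dual := by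
  intro h
  have h1 := congrArg CForm.counter h
  rw [CForm.counter_dual, IForm.counter_pos, IForm.counter_pos] at h1
  omega

end NACLL
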